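/- Finitely generated free groups are omnipotent: let F be a finitely generated free group and let g_1, …, g_r ∈ F be nontrivial elements that are pairwise independent, i.e. for all i ≠ j no nontrivial power of g_i is conjugate in F to a nontrivial power of g_j. Then there exists a positive integer d = d(g_1,…,g_r) such that for every r-tuple (n_1, …, n_r) of positive integers there exist a finite group Q and a surjective homomorphism q : F → Q such that the order of q(g_i) in Q is exactly d·n_i for each i = 1, …, r. -/

import Mathlib

/-!
Let `P` be a finite quotient of `F` in whose Cayley graph the axes of all `g i` and `(g i)⁻¹`
become cycles without self-intersections, and let `K` be the kernel of `F → P`. Counting how often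
a loop runs through an edge of the Cayley graph gives homomorphisms `K → ℤ`, and they show that
powers of `g i` and of conjugates of `g j`, `j ≠ i`, are not proportional in the homology of `K`.
Since a group is not a finite union of subgroups of infinite index, some `ψ : K → ℤ` vanishes at a
power of `g i` but at no power of a conjugate of a `g j`.

In the cyclic cover of large prime degree `p` given by `ψ` modulo `p`, the power of `g i` lifts to
`p` loops and each of the other elements to a single one. As the deck group permutes the former and
fixes the latter, the difference `φ` of a homomorphism and a translate of it by the deck group can
be chosen nonzero at a power of `g i`, while it always vanishes at the powers of conjugates of
`g j`. Requiring `φ` to be divisible by `N` at all conjugates defines normal subgroups of finite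
index in `F`. As `N` varies, the order of `g i` modulo these is any multiple of a constant, while
the orders of the `g j` divide this constant. Intersecting the subgroups obtained for the various
`i` makes the orders of all `g i` independent.
-/

universe u

section Cocycles

variable {ι G P A : Type*} [Group G] [Group P] [AddCommGroup A] {π : G →* P} {S : G → P → A}

/-- Path integrals in the Cayley graph of `P`: `S x r` is the integral along the path labelled `x`
that starts at the vertex `r`, labels being read in `P` through `π`. -/
structure IsCocycle (π : G →* P) (S : G → P → A) : Prop where
  map_mul (x y : G) (r : P) : S (x * y) r = S x r + S y (r * π x)

theorem exists_isCocycle (b : FreeGroupBasis ι G) (π : G →* P) (c : P → ι → A) :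
    ∃ S : G → P → A, IsCocycle π S ∧ ∀ i r, S (b i) r = c r i := by
  -- A cocycle is a lift of `π` to the wreath product of `A` and `P`.
  let W : G →* RegularWreathProduct (Multiplicative A) P :=
    b.lift fun i => ⟨fun q => .ofAdd (c q⁻¹ i), π (b i)⟩
  have hW (i : ι) : W (b i) = ⟨fun q => .ofAdd (c q⁻¹ i), π (b i)⟩ := by simp [W]
  have hW_right : RegularWreathProduct.rightHom.comp W = π :=
    b.ext_hom _ _ fun i => by simp [hW, RegularWreathProduct.rightHom]
  have hright (x : G) : (W x).right = π x := DFunLike.congr_fun hW_right x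
  exact ⟨fun x r => ((W x).left r⁻¹).toAdd, ⟨fun x y r => by simp [hright]⟩,
    fun i r => by simp [hW]⟩

namespace IsCocycle

theorem map_one (hS : IsCocycle π S) (r : P) : S 1 r = 0 := by
  simpa using hS.map_mul 1 1 r

theorem map_inv (hS : IsCocycle π S) (x : G) (r : P) : S x⁻¹ r = -S x (r * (π x)⁻¹) := by
  apply eq_neg_of_add_eq_zero_left
  simpa [hS.map_one] using (hS.map_mul x⁻¹ x r).symm

/-- Over loops, the path integral from a fixed base point is a homomorphism. -/
def kerHom (hS : IsCocycle π S) (r : P) : Additive π.ker →+ A :=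
  AddMonoidHom.mk' (fun x => S (x.toMul : G) r) fun x y => by
    have hx : π (x.toMul : G) = 1 := x.toMul.2
    simp [hS.map_mul, hx]

@[simp]
theorem kerHom_apply (hS : IsCocycle π S) (r : P) (x : π.ker) :
    hS.kerHom r (.ofMul x) = S (x : G) r :=
  rfl

/-- The total of a cocycle over all starting vertices. -/
def sumHom [Fintype P] (hS : IsCocycle π S) : Additive G →+ A :=
  AddMonoidHom.mk' (fun x => ∑ r, S x.toMul r) fun x y => by
    simp only [toMul_add, hS.map_mul, Finset.sum_add_distrib]
    congr 1
    exact Fintype.sum_equiv (Equiv.mulRight (π x.toMul)) _ _ fun r => rfl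

theorem apply_mul_map_of_map_pow_eq_one (hS : IsCocycle π S) {x : G} {n : ℕ} (hn : π x ^ n = 1)
    (r : P) : S (x ^ n) (r * π x) = S (x ^ n) r := by
  have h := hS.map_mul x (x ^ n) r
  rw [← pow_succ', pow_succ, hS.map_mul, map_pow, hn, mul_one, add_comm] at h
  exact (add_left_cancel h).symm

theorem apply_mul_of_mem_zpowers (hS : IsCocycle π S) {x : G} {n : ℕ} (hn : π x ^ n = 1) {q : P}
    (hq : q ∈ Subgroup.zpowers (π x)) (r : P) : S (x ^ n) (r * q) = S (x ^ n) r := by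
  obtain ⟨k, rfl⟩ := hq
  dsimp only
  induction k with
  | zero => simp
  | succ k ih =>
    rw [zpow_add_one, ← mul_assoc, hS.apply_mul_map_of_map_pow_eq_one hn, ih]
  | pred k ih =>
    rw [← ih, ← hS.apply_mul_map_of_map_pow_eq_one hn, zpow_sub_one, mul_assoc,
      inv_mul_cancel_right]

end IsCocycle

theorem exists_isCocycle_sum_eq [Fintype P] (b : FreeGroupBasis ι G) (π : G →* P)
    (θ : Additive G →+ A) :
    ∃ S : G → P → A, IsCocycle π S ∧ ∀ x, ∑ r, S x r = θ (.ofMul x) := by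
  classical
  obtain ⟨S, hS, hSb⟩ := exists_isCocycle b π fun r i => if r = 1 then θ (.ofMul (b i)) else 0
  have hsum : hS.sumHom.toMultiplicativeRight = θ.toMultiplicativeRight :=
    b.ext_hom _ _ fun i =>
      congrArg Multiplicative.ofAdd (show ∑ r, S (b i) r = θ (.ofMul (b i)) by simp [hSb])
  exact ⟨S, hS, fun x =>
    DFunLike.congr_fun (AddMonoidHom.toMultiplicativeRight.injective hsum) (.ofMul x)⟩

theorem exists_kerHom_ne_zero [IsFreeGroup G] [Finite P] (π : G →* P) (θ : Additive G →+ ℤ) {v : G}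
    (hv : v ∈ π.ker) (hθv : ¬(Nat.card P : ℤ) ∣ θ (.ofMul v)) :
    ∃ φ : Additive π.ker →+ ℤ, φ (.ofMul ⟨v, hv⟩) ≠ 0 ∧
      ∀ (x : G) (n : ℕ) (hx : x ^ n ∈ π.ker), Subgroup.zpowers (π x) = ⊤ →
        φ (.ofMul ⟨x ^ n, hx⟩) = 0 := by
  have := Fintype.ofFinite P
  obtain ⟨S, hS, hSsum⟩ := exists_isCocycle_sum_eq (IsFreeGroup.basis G) π θ
  obtain ⟨r, hr⟩ : ∃ r, S v r ≠ S v 1 := by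
    -- If `S v` were constant, its sum `θ v` would be divisible by the order of `P`.
    by_contra! hconst
    apply hθv
    rw [← hSsum, Finset.sum_congr rfl fun r _ => hconst r]
    simp
  refine ⟨hS.kerHom r - hS.kerHom 1, by simpa [sub_eq_zero] using hr, fun x n hx hgen => ?_⟩
  have hn : π x ^ n = 1 := by rwa [MonoidHom.mem_ker, map_pow] at hx
  have hr_mem : r ∈ Subgroup.zpowers (π x) := hgen ▸ Subgroup.mem_top r
  simpa [sub_eq_zero] using hS.apply_mul_of_mem_zpowers hn hr_mem 1

end Cocycles

section AdjustableOrder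

theorem orderOf_mk_dvd_iff {G : Type*} [Group G] {N : Subgroup G} [N.Normal] {x : G} {n : ℕ} :
    orderOf (x : G ⧸ N) ∣ n ↔ x ^ n ∈ N := by
  rw [orderOf_dvd_iff_pow_eq_one, ← QuotientGroup.mk_pow, QuotientGroup.eq_one_iff]

/-- In finite quotients of `G`, the order of `x` can be any multiple of some `D` while the orders of
the elements of `T` divide `D`. -/
def HasAdjustableOrder {G : Type*} [Group G] (x : G) (T : Set G) : Prop :=
  ∃ D : ℕ, 0 < D ∧ ∀ n : ℕ, 0 < n → ∃ (C : Subgroup G) (_ : C.Normal), C.FiniteIndex ∧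
    orderOf (x : G ⧸ C) = D * n ∧ ∀ y ∈ T, y ^ D ∈ C

theorem HasAdjustableOrder.mono {G : Type*} [Group G] {x : G} {T U : Set G}
    (h : HasAdjustableOrder x U) (hTU : T ⊆ U) : HasAdjustableOrder x T := by
  obtain ⟨D, hD, hC⟩ := h
  refine ⟨D, hD, fun n hn => ?_⟩
  obtain ⟨C, hCn, hCf, hx, hU⟩ := hC n hn
  exact ⟨C, hCn, hCf, hx, fun y hy => hU y (hTU hy)⟩

theorem exists_forall_orderOf_mk_eq {G ι : Type*} [Group G] [Finite ι] {g : ι → G}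
    (hg : ∀ i, HasAdjustableOrder (g i) (g '' {i}ᶜ)) :
    ∃ d : ℕ, 0 < d ∧ ∀ n : ι → ℕ, (∀ i, 0 < n i) →
      ∃ (N : Subgroup G) (_ : N.Normal), N.FiniteIndex ∧
        ∀ i, orderOf (g i : G ⧸ N) = d * n i := by
  cases nonempty_fintype ι
  choose D hD hDC using hg
  choose c hc using fun i => Finset.dvd_prod_of_mem D (Finset.mem_univ i)
  have hd : 0 < ∏ i, D i := Finset.prod_pos fun i _ => hD i
  refine ⟨∏ i, D i, hd, fun n hn => ?_⟩
  have hcn (i : ι) : 0 < c i * n i := Nat.mul_pos (Nat.pos_of_mul_pos_left (hc i ▸ hd)) (hn i)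
  choose C hCnormal hCfin hCi hCj using fun i => hDC i (c i * n i) (hcn i)
  replace hCi (i : ι) : orderOf (g i : G ⧸ C i) = (∏ i, D i) * n i := by rw [hCi, hc i, mul_assoc]
  have hnormal : (⨅ i, C i).Normal := Subgroup.normal_iInf_normal hCnormal
  refine ⟨⨅ i, C i, hnormal, Subgroup.finiteIndex_iInf hCfin, fun i => ?_⟩
  refine Nat.dvd_right_iff_eq.1 fun l => ?_
  rw [orderOf_mk_dvd_iff, Subgroup.mem_iInf, ← hCi i, orderOf_mk_dvd_iff]
  refine ⟨fun h => h i, fun h k => ?_⟩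
  obtain rfl | hik := eq_or_ne i k
  · exact h
  · have hDk : D k ∣ l := by
      rw [← orderOf_mk_dvd_iff, hCi] at h
      exact ((Dvd.intro _ (hc k).symm).mul_right (n i)).trans h
    obtain ⟨s, rfl⟩ := hDk
    rw [pow_mul]
    exact pow_mem (hCj k _ (Set.mem_image_of_mem g hik)) s

end AdjustableOrder

theorem exists_forall_dvd_mul_iff {ι R : Type*} [CommRing R] [IsPrincipalIdealRing R] (w : ι → R) :
    ∃ c, ∀ s t, (∀ i, t ∣ s * w i) ↔ t ∣ s * c := by
  obtain ⟨c, hc⟩ := (IsPrincipalIdealRing.principal (Ideal.span (Set.range w))).principal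
  refine ⟨c, fun s t => ?_⟩
  calc (∀ i, t ∣ s * w i)
    _ ↔ Ideal.span {s} * Ideal.span (Set.range w) ≤ Ideal.span {t} := by
        rw [Ideal.span_mul_span', Ideal.span_le]
        simp [Set.subset_def, Ideal.mem_span_singleton]
    _ ↔ t ∣ s * c := by
        rw [hc, Ideal.submodule_span_eq, Ideal.span_singleton_mul_span_singleton,
          Ideal.span_singleton_le_span_singleton]

/-- Reduction modulo `N` of a homomorphism to `ℤ`. -/
def reduceMod {L : Type*} [Group L] (φ : Additive L →+ ℤ) (N : ℕ) : L →* Multiplicative (ZMod N) :=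
  ((Int.castAddHom (ZMod N)).comp φ).toMultiplicativeRight

theorem mem_ker_reduceMod {L : Type*} [Group L] {φ : Additive L →+ ℤ} {N : ℕ} {x : L} :
    x ∈ (reduceMod φ N).ker ↔ (N : ℤ) ∣ φ (.ofMul x) :=
  ZMod.intCast_zmod_eq_zero_iff_dvd (φ (.ofMul x)) N

section CongruenceCore

variable {F L : Type*} [Group F] [Group L] {j : L →* F} {φ : Additive L →+ ℤ} {N : ℕ}

/-- For a group `L` mapped to `F` by `j`, the largest normal subgroup of `F` inside the image of
the elements of `L` at which `φ` is divisible by `N`. -/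
def congruenceCore (j : L →* F) (φ : Additive L →+ ℤ) (N : ℕ) : Subgroup F :=
  ((reduceMod φ N).ker.map j).normalCore

instance : (congruenceCore j φ N).Normal :=
  Subgroup.normalCore_normal _

theorem mem_congruenceCore {x : F} :
    x ∈ congruenceCore j φ N ↔ ∀ f, ∃ y, j y = f * x * f⁻¹ ∧ (N : ℤ) ∣ φ (.ofMul y) := by
  refine forall_congr' fun f => exists_congr fun y => ?_
  rw [SetLike.mem_coe, mem_ker_reduceMod, and_comm]

theorem mem_congruenceCore_iff_of_injective (hj : Function.Injective j) {x : F} {y : F → L}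
    (hy : ∀ f, j (y f) = f * x * f⁻¹) :
    x ∈ congruenceCore j φ N ↔ ∀ f, (N : ℤ) ∣ φ (.ofMul (y f)) := by
  refine mem_congruenceCore.trans (forall_congr' fun f => ⟨?_, fun h => ⟨y f, hy f, h⟩⟩)
  rintro ⟨z, hz, hdvd⟩
  rwa [← hj (hz.trans (hy f).symm)]

theorem congruenceCore_le_normalCore_range : congruenceCore j φ N ≤ j.range.normalCore :=
  Subgroup.normalCore_mono (Subgroup.map_le_range _ _)

instance [NeZero N] [j.range.FiniteIndex] : (congruenceCore j φ N).FiniteIndex := by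
  have : ((reduceMod φ N).ker.map j).FiniteIndex := by
    constructor
    rw [Subgroup.index_map]
    exact mul_ne_zero
      (Subgroup.finiteIndex_of_le le_sup_left).index_ne_zero Subgroup.FiniteIndex.index_ne_zero
  exact Subgroup.finiteIndex_normalCore _

theorem exists_map_eq_conj {x : F} (hx : x ∈ j.range.normalCore) :
    ∃ y : F → L, ∀ f, j (y f) = f * x * f⁻¹ :=
  Classical.skolem.1 hx

/-- Every conjugate of `h` has a nontrivial power in `L` at which `φ` vanishes. -/
def VanishesVirtually (j : L →* F) (φ : Additive L →+ ℤ) (h : F) : Prop :=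
  ∀ f, ∃ y, φ (.ofMul y) = 0 ∧ ∃ k ≠ 0, j y = f * h ^ k * f⁻¹

theorem VanishesVirtually.pow_mem_congruenceCore (hj : Function.Injective j) {h : F}
    (hh : VanishesVirtually j φ h) {n : ℕ} (hn : h ^ n ∈ j.range.normalCore) :
    h ^ n ∈ congruenceCore j φ N := by
  obtain ⟨y, hy⟩ := exists_map_eq_conj hn
  refine (mem_congruenceCore_iff_of_injective hj hy).2 fun f => ?_
  obtain ⟨z, hφz, k, hk, hz⟩ := hh f
  have hyz : y f ^ k = z ^ n := hj <| by
    rw [map_pow, map_pow, hy, hz, conj_pow, conj_pow, ← pow_mul, ← pow_mul, mul_comm]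
  have hφy : k • φ (.ofMul (y f)) = 0 := by rw [← map_nsmul, ← ofMul_pow, hyz]; simp [hφz]
  simp [(smul_eq_zero.1 hφy).resolve_left hk]

theorem exists_pow_mem_congruenceCore_iff (hj : Function.Injective j) [j.range.FiniteIndex] {v : F}
    {m : ℕ} {z : L} (hz : j z = v ^ m) (hφz : φ (.ofMul z) ≠ 0) :
    ∃ c : ℕ, 0 < c ∧ ∀ n l : ℕ, v ^ l ∈ congruenceCore j φ (c * n) ↔
      orderOf (v : F ⧸ j.range.normalCore) * n ∣ l := by
  set μ := orderOf (v : F ⧸ j.range.normalCore)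
  obtain ⟨y, hy⟩ := exists_map_eq_conj (orderOf_mk_dvd_iff.1 (dvd_refl μ))
  obtain ⟨c, hc⟩ := exists_forall_dvd_mul_iff fun f => φ (.ofMul (y f))
  have hc0 : c ≠ 0 := by
    rintro rfl
    have hφy : φ (.ofMul (y 1)) = 0 := by simpa using (hc 1 0).2 (by simp) 1
    have hyz : y 1 ^ m = z ^ μ := hj <| by
      rw [map_pow, map_pow, hy, hz, one_mul, inv_one, mul_one, ← pow_mul, ← pow_mul, mul_comm]
    have hφz' : μ • φ (.ofMul z) = 0 := by rw [← map_nsmul, ← ofMul_pow, ← hyz]; simp [hφy]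
    exact (smul_ne_zero (orderOf_pos _).ne' hφz) hφz'
  have hpow (n k : ℕ) : v ^ (μ * k) ∈ congruenceCore j φ (c.natAbs * n) ↔ n ∣ k := by
    have hyk (f : F) : j (y f ^ k) = f * v ^ (μ * k) * f⁻¹ := by
      rw [map_pow, hy, conj_pow, pow_mul]
    rw [mem_congruenceCore_iff_of_injective hj hyk]
    simp only [ofMul_pow, map_nsmul, nsmul_eq_mul]
    rw [hc, ← Int.natAbs_dvd_natAbs, Int.natAbs_mul, Int.natAbs_natCast, Int.natAbs_natCast,
      mul_comm, Nat.mul_dvd_mul_iff_right (Int.natAbs_pos.2 hc0)]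
  refine ⟨c.natAbs, Int.natAbs_pos.2 hc0, fun n l => ⟨fun h => ?_, ?_⟩⟩
  · obtain ⟨k, rfl⟩ := orderOf_mk_dvd_iff.2 (congruenceCore_le_normalCore_range h)
    exact mul_dvd_mul_left μ ((hpow n k).1 h)
  · rintro ⟨k, rfl⟩
    rw [mul_assoc, hpow]
    exact dvd_mul_right n k

theorem hasAdjustableOrder_of_apply_ne_zero (hj : Function.Injective j) [j.range.FiniteIndex]
    {v : F} {m : ℕ} {z : L} (hz : j z = v ^ m) (hφz : φ (.ofMul z) ≠ 0) :
    HasAdjustableOrder v {h | VanishesVirtually j φ h} := by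
  obtain ⟨c, hc, hmem⟩ := exists_pow_mem_congruenceCore_iff hj hz hφz
  set R := j.range.normalCore
  have hD : 0 < R.index := Nat.pos_of_ne_zero Subgroup.FiniteIndex.index_ne_zero
  obtain ⟨e, he⟩ : orderOf (v : F ⧸ R) ∣ R.index := orderOf_mk_dvd_iff.2 (R.pow_index_mem v)
  refine ⟨R.index, hD, fun n hn => ?_⟩
  have : NeZero (c * (e * n)) :=
    ⟨(Nat.mul_pos hc (Nat.mul_pos (Nat.pos_of_mul_pos_left (he ▸ hD)) hn)).ne'⟩
  refine ⟨congruenceCore j φ (c * (e * n)), inferInstance, inferInstance, ?_, fun h hh =>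
    hh.pow_mem_congruenceCore hj (R.pow_index_mem h)⟩
  refine Nat.dvd_right_iff_eq.1 fun l => ?_
  rw [orderOf_mk_dvd_iff, hmem, he, mul_assoc]

end CongruenceCore

section Axes

variable {α : Type*}

/-- The formal inverse of a letter. -/
def letterInv (x : α × Bool) : α × Bool :=
  (x.1, !x.2)

@[simp]
theorem letterInv_letterInv (x : α × Bool) : letterInv (letterInv x) = x := by
  simp [letterInv]

theorem mk_letterInv (x : α × Bool) : FreeGroup.mk [letterInv x] = (FreeGroup.mk [x])⁻¹ := by
  simp [letterInv, FreeGroup.inv_mk, FreeGroup.invRev]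

/-- The vertices of the path in the Cayley graph of the free group that starts at `t` and is
labelled by the infinite word `a`. -/
def pathVertex (t : FreeGroup α) (a : ℕ → α × Bool) : ℕ → FreeGroup α
  | 0 => t
  | n + 1 => pathVertex t a n * FreeGroup.mk [a n]

theorem mul_pathVertex (f t : FreeGroup α) (a : ℕ → α × Bool) (n : ℕ) :
    f * pathVertex t a n = pathVertex (f * t) a n := by
  induction n with
  | zero => rfl
  | succ n ih => rw [pathVertex, ← mul_assoc, ih, pathVertex]

theorem pathVertex_add (t : FreeGroup α) (a : ℕ → α × Bool) (m n : ℕ) :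
    pathVertex t a (m + n) = pathVertex (pathVertex t a m) (fun k => a (m + k)) n := by
  induction n with
  | zero => rfl
  | succ n ih => rw [← add_assoc, pathVertex, ih, pathVertex]

theorem pathVertex_eq_mul_mk (t : FreeGroup α) (a : ℕ → α × Bool) (n : ℕ) :
    pathVertex t a n = t * FreeGroup.mk ((List.range n).map a) := by
  induction n with
  | zero => simp [pathVertex, ← FreeGroup.one_eq_mk]
  | succ n ih =>
    rw [pathVertex, ih, mul_assoc, FreeGroup.mul_mk, List.range_succ, List.map_append,
      List.map_singleton]

/-- The path starting at `t` and labelled by the reduced word `a` of period `ℓ` is a ray of the axis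
of `g`, along which `g` translates by `ℓ`. -/
structure IsAxis (a : ℕ → α × Bool) (ℓ : ℕ) (t g : FreeGroup α) : Prop where
  pos : 0 < ℓ
  periodic : Function.Periodic a ℓ
  reduced (i : ℕ) : a (i + 1) ≠ letterInv (a i)
  mul_eq : g * t = pathVertex t a ℓ

namespace IsAxis

variable {a a' : ℕ → α × Bool} {ℓ ℓ' : ℕ} {t t' g h : FreeGroup α}

theorem conj (ha : IsAxis a ℓ t g) (f : FreeGroup α) : IsAxis a ℓ (f * t) (f * g * f⁻¹) where
  __ := ha
  mul_eq := by rw [← mul_pathVertex, ← ha.mul_eq]; group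

theorem pow_mul_pathVertex (ha : IsAxis a ℓ t g) (m n : ℕ) :
    g ^ m * pathVertex t a n = pathVertex t a (m * ℓ + n) := by
  induction m with
  | zero => simp
  | succ m ih =>
    have hshift : (fun k => a (ℓ + k)) = a := funext fun k => by rw [add_comm, ha.periodic]
    rw [pow_succ', mul_assoc, ih, mul_pathVertex, ha.mul_eq, add_one_mul, add_comm (m * ℓ) ℓ,
      add_assoc, pathVertex_add t a ℓ, hshift]

theorem pow_mul_eq (ha : IsAxis a ℓ t g) (m : ℕ) : g ^ m * t = pathVertex t a (m * ℓ) :=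
  ha.pow_mul_pathVertex m 0

theorem isConj_pow_of_shift (ha : IsAxis a ℓ t g) (ha' : IsAxis a' ℓ' t' h) {k : ℕ}
    (hk : ∀ n, a' n = a (k + n)) : IsConj (g ^ ℓ') (h ^ ℓ) := by
  set u := t' * (pathVertex t a k)⁻¹ with hu
  have htrans : h ^ ℓ * t' = u * (g ^ ℓ' * pathVertex t a k) := by
    rw [ha.pow_mul_pathVertex, ha'.pow_mul_eq, funext hk, add_comm, pathVertex_add, mul_pathVertex,
      hu, inv_mul_cancel_right, mul_comm]
  refine isConj_iff.2 ⟨u, eq_of_mul_inv_eq_one ?_⟩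
  rw [eq_mul_inv_of_mul_eq htrans, hu]
  group

end IsAxis

theorem exists_periodic_of_isCyclicallyReduced {L : List (α × Bool)}
    (hL : FreeGroup.IsCyclicallyReduced L) (hne : L ≠ []) :
    ∃ a : ℕ → α × Bool, Function.Periodic a L.length ∧ (∀ i, a (i + 1) ≠ letterInv (a i)) ∧
      (List.range L.length).map a = L := by
  have hlen : 0 < L.length := List.length_pos_iff.2 hne
  have hLL : FreeGroup.IsReduced (L ++ L) := by
    simpa [List.replicate] using (hL.flatten_replicate 2).1
  refine ⟨fun i => L[i % L.length]'(Nat.mod_lt i hlen), fun i => by simp, fun i heq => ?_, ?_⟩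
  · have hget (k : ℕ) (hk : k < (L ++ L).length) :
        (L ++ L)[k] = L[k % L.length]'(Nat.mod_lt k hlen) := by
      rw [List.length_append] at hk
      rw [List.getElem_append]
      split_ifs with hkL
      · simp [Nat.mod_eq_of_lt hkL]
      · simp [Nat.mod_eq_sub_mod (not_lt.1 hkL), Nat.mod_eq_of_lt (Nat.sub_lt_left_of_lt_add
          (not_lt.1 hkL) hk)]
    have hi : i % L.length + 1 < (L ++ L).length := by
      have := Nat.mod_lt i hlen
      rw [List.length_append]
      lia
    have hstep := List.isChain_iff_getElem.1 hLL (i % L.length) hi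
    simp only [hget, Nat.mod_mod, Nat.mod_add_mod, heq] at hstep
    simp [letterInv] at hstep
  · exact List.ext_getElem (by simp) fun i hi _ => by simp [Nat.mod_eq_of_lt (by simpa using hi)]

theorem exists_isAxis {g : FreeGroup α} (hg : g ≠ 1) : ∃ a ℓ t, IsAxis a ℓ t g := by
  classical
  set L := FreeGroup.reduceCyclically g.toWord
  set t := FreeGroup.mk (FreeGroup.reduceCyclically.conjugator g.toWord)
  have hgt : t * FreeGroup.mk L * t⁻¹ = g := by
    rw [FreeGroup.inv_mk, FreeGroup.mul_mk, FreeGroup.mul_mk,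
      FreeGroup.reduceCyclically.conj_conjugator_reduceCyclically, FreeGroup.mk_toWord]
  have hL : L ≠ [] := fun h => hg <| by
    rw [← hgt, h, ← FreeGroup.one_eq_mk, mul_one, mul_inv_cancel]
  obtain ⟨a, hper, hred, hword⟩ := exists_periodic_of_isCyclicallyReduced
    (FreeGroup.reduceCyclically.isCyclicallyReduced FreeGroup.isReduced_toWord) hL
  refine ⟨a, L.length, t, List.length_pos_iff.2 hL, hper, hred, ?_⟩
  rw [pathVertex_eq_mul_mk, hword]
  exact eq_mul_inv_iff_mul_eq.1 hgt.symm

/-- An axis of `g` whose image in the Cayley graph of `P` is a cycle without self-intersections: the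
image of a vertex determines the label of the edge by which the axis leaves the vertex. -/
structure IsEmbeddedAxis {P : Type*} [Group P] (π : FreeGroup α →* P) (a : ℕ → α × Bool) (ℓ : ℕ)
    (t g : FreeGroup α) : Prop extends IsAxis a ℓ t g where
  letter_eq (i j : ℕ) : π (pathVertex t a i) = π (pathVertex t a j) → a i = a j

/-- The axis of `g` maps to a cycle without self-intersections in the Cayley graph of `P`. It is
encoded by a ray, so that it is directed: `g` and `g⁻¹` have different rays. -/
def HasEmbeddedAxis {P : Type*} [Group P] (π : FreeGroup α →* P) (g : FreeGroup α) : Prop :=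
  ∃ a ℓ t, IsEmbeddedAxis π a ℓ t g

theorem HasEmbeddedAxis.conj {P : Type*} [Group P] {π : FreeGroup α →* P} {g : FreeGroup α}
    (hg : HasEmbeddedAxis π g) (f : FreeGroup α) : HasEmbeddedAxis π (f * g * f⁻¹) := by
  obtain ⟨a, ℓ, t, ha⟩ := hg
  refine ⟨a, ℓ, f * t, ha.toIsAxis.conj f, fun i j hij => ha.letter_eq i j ?_⟩
  simpa [← mul_pathVertex] using hij

theorem HasEmbeddedAxis.of_comp {P Q : Type*} [Group P] [Group Q] {π : FreeGroup α →* P}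
    {f : P →* Q} {g : FreeGroup α} (hg : HasEmbeddedAxis (f.comp π) g) : HasEmbeddedAxis π g := by
  obtain ⟨a, ℓ, t, ha⟩ := hg
  exact ⟨a, ℓ, t, ha.toIsAxis, fun i j hij => ha.letter_eq i j (congrArg f hij)⟩

theorem exists_perm_of_biUnique {X : Type*} [Finite X] {R : X → X → Prop}
    (hR : Relator.BiUnique R) : ∃ σ : Equiv.Perm X, ∀ x y, R x y → σ x = y := by
  classical
  cases nonempty_fintype X
  have hex (x : X) : ∃ y, ∀ z, R x z → y = z := by
    by_cases h : ∃ z, R x z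
    · exact h.imp fun y hy z hz => hR.2 hy hz
    · exact ⟨x, fun z hz => absurd ⟨z, hz⟩ h⟩
  choose f hf using hex
  have hinj : Set.InjOn f {x | ∃ y, R x y} := by
    rintro x ⟨y, hy⟩ x' ⟨y', hy'⟩ h
    rw [hf x y hy, hf x' y' hy'] at h
    exact hR.1 hy (h ▸ hy')
  obtain ⟨σ, hσ⟩ := Set.MapsTo.exists_equiv_extend_of_card_eq (t := Finset.univ)
    (Finset.card_univ (α := X)).symm (fun _ _ => Finset.mem_coe.2 (Finset.mem_univ _)) hinj
  exact ⟨σ.trans (Equiv.subtypeUnivEquiv Finset.mem_univ), fun x y h =>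
    (hσ x ⟨y, h⟩).trans (hf x y h)⟩

theorem exists_hom_mk_apply {X : Type*} [Finite X] {c : X → α × Bool} {τ : X → X}
    (hτ : Function.Injective τ) (hc : ∀ x, c (τ x) ≠ letterInv (c x)) :
    ∃ ρ : FreeGroup α →* Equiv.Perm X, ∀ x, ρ (FreeGroup.mk [c x]) (τ x) = x := by
  have hσ (s : α) : ∃ σ : Equiv.Perm X, ∀ x y,
      (c y = (s, true) ∧ x = τ y ∨ c x = (s, false) ∧ y = τ x) → σ x = y := by
    refine exists_perm_of_biUnique ⟨?_, ?_⟩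
    · rintro x x' y (⟨hy, hx⟩ | ⟨hx, hy⟩) (⟨hy', hx'⟩ | ⟨hx', hy'⟩)
      · rw [hx, hx']
      · exact absurd (by rw [← hy', hx', hy]; rfl) (hc x')
      · exact absurd (by rw [← hy, hx, hy']; rfl) (hc x)
      · exact hτ (hy.symm.trans hy')
    · rintro x y y' (⟨hy, hx⟩ | ⟨hx, hy⟩) (⟨hy', hx'⟩ | ⟨hx', hy'⟩)
      · exact hτ (hx.symm.trans hx')
      · exact absurd (by rw [← hx, hx', hy]; rfl) (hc y)
      · exact absurd (by rw [← hx', hx, hy']; rfl) (hc y')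
      · rw [hy, hy']
  choose σ hσ using hσ
  refine ⟨FreeGroup.lift σ, fun x => ?_⟩
  rcases hx : c x with ⟨s, b⟩
  cases b
  · have hs : σ s x = τ x := hσ s x (τ x) (.inr ⟨hx, rfl⟩)
    simp [FreeGroup.lift_mk, Equiv.symm_apply_eq, hs]
  · have hs : σ s (τ x) = x := hσ s (τ x) x (.inl ⟨hx, rfl⟩)
    simp [FreeGroup.lift_mk, hs]

theorem IsAxis.exists_isEmbeddedAxis_perm {a : ℕ → α × Bool} {ℓ : ℕ} {t g : FreeGroup α}
    (ha : IsAxis a ℓ t g) :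
    ∃ ρ : FreeGroup α →* Equiv.Perm (ZMod ℓ), IsEmbeddedAxis ρ a ℓ t g := by
  have : NeZero ℓ := ⟨ha.pos.ne'⟩
  have hval (n : ℕ) : a (n : ZMod ℓ).val = a n := by rw [ZMod.val_natCast, ha.periodic.map_mod_nat]
  obtain ⟨ρ, hρ⟩ := exists_hom_mk_apply (c := fun x : ZMod ℓ => a x.val) (add_left_injective 1)
    fun x => by
      have hx := hval (x.val + 1)
      rw [Nat.cast_add_one, ZMod.natCast_zmod_val] at hx
      exact hx ▸ ha.reduced x.val
  have hpath (n : ℕ) : ρ (pathVertex t a n) n = ρ t 0 := by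
    induction n with
    | zero => simp [pathVertex]
    | succ n ih =>
      have hn := hρ n
      rw [hval] at hn
      rw [pathVertex, map_mul, Equiv.Perm.mul_apply, Nat.cast_add_one, hn, ih]
  refine ⟨ρ, ha, fun i j hij => ?_⟩
  rw [← hval i, ← hval j, (ρ (pathVertex t a i)).injective ((hpath i).trans (hij ▸ hpath j).symm)]

theorem exists_forall_hasEmbeddedAxis {α : Type u} {U : Set (FreeGroup α)} (hU : U.Finite)
    (hU1 : 1 ∉ U) :
    ∃ (P : Type u) (_ : Group P) (_ : Finite P) (π : FreeGroup α →* P),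
      ∀ g ∈ U, HasEmbeddedAxis π g := by
  have := hU.to_subtype
  choose a ℓ t ha using fun g : U => exists_isAxis (ne_of_mem_of_not_mem g.2 hU1)
  choose ρ hρ using fun g => (ha g).exists_isEmbeddedAxis_perm
  have (g : U) : NeZero (ℓ g) := ⟨(ha g).pos.ne'⟩
  exact ⟨∀ g, Equiv.Perm (ZMod (ℓ g)), inferInstance, inferInstance, MonoidHom.pi ρ, fun g hg =>
    .of_comp (f := Pi.evalMonoidHom _ (⟨g, hg⟩ : U)) ⟨_, _, _, hρ ⟨g, hg⟩⟩⟩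

end Axes

section Independent

variable {G : Type*} [Group G] {g h : G}

/-- No nontrivial powers of the two elements are conjugate. -/
def AreIndependent (g h : G) : Prop :=
  ∀ m n : ℤ, m ≠ 0 → n ≠ 0 → ¬IsConj (g ^ m) (h ^ n)

namespace AreIndependent

theorem inv_right (hgh : AreIndependent g h) : AreIndependent g h⁻¹ := fun m n hm hn hc =>
  hgh m (-n) hm (neg_ne_zero.2 hn) (by rwa [zpow_neg, ← inv_zpow])

theorem conj_right (hgh : AreIndependent g h) (f : G) : AreIndependent g (f * h * f⁻¹) := by
  intro m n hm hn hc
  rw [conj_zpow] at hc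
  exact hgh m n hm hn (hc.trans (isConj_iff.2 ⟨f, rfl⟩).symm)

theorem map_equiv {H : Type*} [Group H] (hgh : AreIndependent g h) (e : G ≃* H) :
    AreIndependent (e g) (e h) := by
  intro m n hm hn hc
  refine hgh m n hm hn ?_
  simpa [← map_zpow] using e.symm.toMonoidHom.map_isConj hc

end AreIndependent

end Independent

section Edges

variable {α P : Type*} [Group P] (π : FreeGroup α →* P)

/-- Reversal of the oriented edges of the Cayley graph of `P`: the edge `(r, x)` starts at the
vertex `r` and is labelled by the letter `x`. -/
def reverseEdge (d : P × (α × Bool)) : P × (α × Bool) :=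
  (d.1 * π (FreeGroup.mk [d.2]), letterInv d.2)

theorem reverseEdge_reverseEdge (d : P × (α × Bool)) : reverseEdge π (reverseEdge π d) = d := by
  simp only [reverseEdge, mk_letterInv, map_inv, mul_inv_cancel_right, letterInv_letterInv]

open Classical in
/-- The signed number of times that running through the edge `d` runs through the edge `e`. -/
noncomputable def crossing (e d : P × (α × Bool)) : ℤ :=
  (if d = e then 1 else 0) - (if reverseEdge π d = e then 1 else 0)

theorem crossing_reverseEdge (e d : P × (α × Bool)) :
    crossing π e (reverseEdge π d) = -crossing π e d := by
  rw [crossing, crossing, reverseEdge_reverseEdge, neg_sub]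

theorem exists_isCocycle_crossing (e : P × (α × Bool)) :
    ∃ S : FreeGroup α → P → ℤ, IsCocycle π S ∧
      ∀ x r, S (FreeGroup.mk [x]) r = crossing π e (r, x) := by
  obtain ⟨S, hS, hSof⟩ := exists_isCocycle (FreeGroupBasis.ofFreeGroup α) π
    fun r s => crossing π e (r, (s, true))
  replace hSof (s : α) (r : P) : S (FreeGroup.mk [(s, true)]) r = crossing π e (r, (s, true)) :=
    hSof s r
  refine ⟨S, hS, fun ⟨s, b⟩ r => ?_⟩
  cases b
  · have hmk : FreeGroup.mk [(s, false)] = (FreeGroup.mk [(s, true)])⁻¹ := mk_letterInv (s, true)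
    rw [hmk, hS.map_inv, hSof, ← crossing_reverseEdge, ← map_inv, ← hmk]
    simp [reverseEdge, hmk, letterInv, -FreeGroup.inv_mk]
  · exact hSof s r

/-- The signed number of times that a loop in the Cayley graph of `P` runs through the edge `e`. -/
noncomputable def edgeHom (e : P × (α × Bool)) : Additive π.ker →+ ℤ :=
  (exists_isCocycle_crossing π e).choose_spec.1.kerHom 1

/-- The edges of the image in the Cayley graph of `P` of the path with vertices `pathVertex t a`. -/
def pathEdge (t : FreeGroup α) (a : ℕ → α × Bool) (n : ℕ) : P × (α × Bool) :=
  (π (pathVertex t a n), a n)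

variable {π} {a a' : ℕ → α × Bool} {ℓ ℓ' m : ℕ} {t t' g h : FreeGroup α}

theorem edgeHom_apply_of_mul_eq {N : ℕ} {k : π.ker} (hk : (k : FreeGroup α) * t = pathVertex t a N)
    (e : P × (α × Bool)) :
    edgeHom π e (.ofMul k) = ∑ i ∈ Finset.range N, crossing π e (pathEdge π t a i) := by
  obtain ⟨hS, hSmk⟩ := (exists_isCocycle_crossing π e).choose_spec
  set S := (exists_isCocycle_crossing π e).choose
  have hpath (n : ℕ) : S (pathVertex t a n) 1 =
      S t 1 + ∑ i ∈ Finset.range n, crossing π e (pathEdge π t a i) := by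
    induction n with
    | zero => simp [pathVertex]
    | succ n ih =>
      rw [pathVertex, hS.map_mul, ih, hSmk, one_mul, Finset.sum_range_succ, add_assoc, pathEdge]
  have hkt : S (k * t) 1 = S k 1 + S t 1 := by
    rw [hS.map_mul, show π k = 1 from k.2, mul_one]
  rw [hk, hpath, add_comm] at hkt
  exact (add_right_cancel hkt).symm

theorem IsAxis.periodic_pathEdge (ha : IsAxis a ℓ t g) (hgm : g ^ m ∈ π.ker) :
    Function.Periodic (pathEdge π t a) (m * ℓ) := fun n => by
  have hletter : a (n + m * ℓ) = a n := ha.periodic.nsmul m n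
  rw [pathEdge, hletter, add_comm, ← ha.pow_mul_pathVertex, map_mul, MonoidHom.mem_ker.1 hgm,
    one_mul, pathEdge]

namespace IsEmbeddedAxis

theorem reverseEdge_pathEdge_ne (ha : IsEmbeddedAxis π a ℓ t g) (i j : ℕ) :
    reverseEdge π (pathEdge π t a i) ≠ pathEdge π t a j := by
  intro h
  have hvertex : π (pathVertex t a (i + 1)) = π (pathVertex t a j) := by
    rw [pathVertex, map_mul]
    exact congrArg Prod.fst h
  exact ha.reduced i ((ha.letter_eq _ _ hvertex).trans (congrArg Prod.snd h).symm)

theorem edgeHom_pow_pos_iff (ha : IsEmbeddedAxis π a ℓ t g) (hm : 0 < m) (hgm : g ^ m ∈ π.ker)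
    {e : P × (α × Bool)} :
    0 < edgeHom π e (.ofMul ⟨g ^ m, hgm⟩) ↔ e ∈ Set.range (pathEdge π t a) := by
  classical
  rw [edgeHom_apply_of_mul_eq (ha.pow_mul_eq m)]
  constructor
  · contrapose
    refine fun he => not_lt.2 (Finset.sum_nonpos fun i _ => ?_)
    rw [crossing, if_neg fun h => he ⟨i, h⟩]
    split_ifs <;> simp
  · rintro ⟨k, rfl⟩
    have hcross (i : ℕ) : crossing π (pathEdge π t a k) (pathEdge π t a i) =
        if pathEdge π t a i = pathEdge π t a k then 1 else 0 := by
      simp [crossing, ha.reverseEdge_pathEdge_ne i k]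
    have hmod : pathEdge π t a (k % (m * ℓ)) = pathEdge π t a k :=
      (ha.periodic_pathEdge hgm).map_mod_nat k
    refine Finset.sum_pos' (fun i _ => ?_) ⟨k % (m * ℓ), ?_, ?_⟩
    · rw [hcross]
      split_ifs <;> simp
    · exact Finset.mem_range.2 (Nat.mod_lt k (Nat.mul_pos hm ha.pos))
    · rw [hcross, if_pos hmod]
      exact one_pos

theorem isConj_pow_of_range_pathEdge_subset (ha : IsEmbeddedAxis π a ℓ t g)
    (ha' : IsAxis a' ℓ' t' h)
    (hsub : Set.range (pathEdge π t' a') ⊆ Set.range (pathEdge π t a)) :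
    IsConj (g ^ ℓ') (h ^ ℓ) := by
  obtain ⟨k, hk⟩ := hsub ⟨0, rfl⟩
  have hshift (n : ℕ) : pathEdge π t' a' n = pathEdge π t a (k + n) := by
    induction n with
    | zero => exact hk.symm
    | succ n ih =>
      have hvertex : π (pathVertex t' a' (n + 1)) = π (pathVertex t a (k + n + 1)) := by
        obtain ⟨hV, hx⟩ := Prod.mk.inj ih
        rw [pathVertex, pathVertex, map_mul, map_mul, hV, hx]
      obtain ⟨i, hi⟩ := hsub ⟨n + 1, rfl⟩
      obtain ⟨hV, hx⟩ := Prod.mk.inj hi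
      exact Prod.ext hvertex (hx.symm.trans (ha.letter_eq _ _ (hV.trans hvertex)))
  exact ha.isConj_pow_of_shift ha' fun n => congrArg Prod.snd (hshift n)

end IsEmbeddedAxis

theorem HasEmbeddedAxis.exists_edgeHom_pow_pos (hg : HasEmbeddedAxis π g) (hm : 0 < m)
    (hgm : g ^ m ∈ π.ker) : ∃ e, 0 < edgeHom π e (.ofMul ⟨g ^ m, hgm⟩) := by
  obtain ⟨a, ℓ, t, ha⟩ := hg
  exact ⟨pathEdge π t a 0, (ha.edgeHom_pow_pos_iff hm hgm).2 ⟨0, rfl⟩⟩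

namespace AreIndependent

theorem exists_edgeHom_pow_nonpos_pos (hgh : AreIndependent g h) (hg : HasEmbeddedAxis π g)
    (hh : HasEmbeddedAxis π h) (hm : 0 < m) (hgm : g ^ m ∈ π.ker) (hhm : h ^ m ∈ π.ker) :
    ∃ e, edgeHom π e (.ofMul ⟨g ^ m, hgm⟩) ≤ 0 ∧ 0 < edgeHom π e (.ofMul ⟨h ^ m, hhm⟩) := by
  obtain ⟨a, ℓ, t, ha⟩ := hg
  obtain ⟨a', ℓ', t', ha'⟩ := hh
  by_contra! hpos
  refine hgh ℓ' ℓ (mod_cast ha'.pos.ne') (mod_cast ha.pos.ne') ?_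
  rw [zpow_natCast, zpow_natCast]
  refine ha.isConj_pow_of_range_pathEdge_subset ha'.toIsAxis fun e he => ?_
  rw [← ha'.edgeHom_pow_pos_iff hm hhm] at he
  rw [← ha.edgeHom_pow_pos_iff hm hgm]
  exact not_le.1 fun hle => he.not_ge (hpos e hle)

theorem exists_hom_eq_zero_ne_zero (hgh : AreIndependent g h) (hg : HasEmbeddedAxis π g)
    (hh : HasEmbeddedAxis π h) (hh' : HasEmbeddedAxis π h⁻¹) (hm : 0 < m) (hgm : g ^ m ∈ π.ker)
    (hhm : h ^ m ∈ π.ker) :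
    ∃ η : Additive π.ker →+ ℤ, η (.ofMul ⟨g ^ m, hgm⟩) = 0 ∧ η (.ofMul ⟨h ^ m, hhm⟩) ≠ 0 := by
  set v : Additive π.ker := .ofMul ⟨g ^ m, hgm⟩
  set w : Additive π.ker := .ofMul ⟨h ^ m, hhm⟩
  obtain ⟨e₀, he₀⟩ := hg.exists_edgeHom_pow_pos hm hgm
  obtain ⟨e, hev, hew⟩ : ∃ e, edgeHom π e v ≤ 0 ∧
      (0 ≤ edgeHom π e₀ w ∧ 0 < edgeHom π e w ∨ edgeHom π e₀ w ≤ 0 ∧ edgeHom π e w < 0) := by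
    obtain hw | hw := le_total 0 (edgeHom π e₀ w)
    · obtain ⟨e, hev, hew⟩ := hgh.exists_edgeHom_pow_nonpos_pos hg hh hm hgm hhm
      exact ⟨e, hev, .inl ⟨hw, hew⟩⟩
    · have hinv : h⁻¹ ^ m ∈ π.ker := inv_pow h m ▸ inv_mem hhm
      obtain ⟨e, hev, hew⟩ := hgh.inv_right.exists_edgeHom_pow_nonpos_pos hg hh' hm hgm hinv
      have hneg : (.ofMul ⟨h⁻¹ ^ m, hinv⟩ : Additive π.ker) = -w :=
        congrArg Additive.ofMul (Subtype.ext (inv_pow h m))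
      rw [hneg, map_neg, Left.neg_pos_iff] at hew
      exact ⟨e, hev, .inr ⟨hw, hew⟩⟩
  -- The combination below vanishes at `v`, and its two terms do not cancel at `w` by their signs.
  refine ⟨edgeHom π e₀ v • edgeHom π e - edgeHom π e v • edgeHom π e₀, ?_, ?_⟩
  · simp [mul_comm]
  · simp only [AddMonoidHom.sub_apply, AddMonoidHom.smul_apply, smul_eq_mul]
    obtain ⟨hw, hew⟩ | ⟨hw, hew⟩ := hew
    · exact (sub_pos.2 ((mul_nonpos_of_nonpos_of_nonneg hev hw).trans_lt (mul_pos he₀ hew))).ne'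
    · exact (sub_neg.2 ((mul_neg_of_pos_of_neg he₀ hew).trans_le
        (mul_nonneg_of_nonpos_of_nonpos hev hw))).ne

end AreIndependent

end Edges

theorem exists_forall_apply_ne_zero {M A : Type*} [AddGroup M] [AddGroup A] [IsAddTorsionFree A]
    {T : Set (M →+ A)} (hT : T.Finite) (hT0 : ∀ f ∈ T, f ≠ 0) : ∃ x, ∀ f ∈ T, f x ≠ 0 := by
  by_contra! hcover
  obtain ⟨f, hf, hindex⟩ := AddSubgroup.exists_finiteIndex_of_leftCoset_cover
    (H := fun f : M →+ A => f.ker) (g := 0) (s := hT.toFinset) <|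
    Set.eq_univ_of_forall fun x => by simpa using hcover x
  refine hT0 f (hT.mem_toFinset.1 hf) (DFunLike.ext _ _ fun x => ?_)
  have hx : f.ker.index • f x = 0 := by rw [← map_nsmul]; exact f.ker.nsmul_index_mem x
  simpa [hindex.index_ne_zero] using hx

theorem eventually_not_intCast_dvd {n : ℤ} (hn : n ≠ 0) :
    ∀ᶠ p : ℕ in Filter.atTop, ¬(p : ℤ) ∣ n := by
  filter_upwards [Filter.eventually_gt_atTop n.natAbs] with p hp hdvd
  exact hp.not_ge (Nat.le_of_dvd (Int.natAbs_pos.2 hn) (Int.natCast_dvd.1 hdvd))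

section Separation

variable {F : Type*} [Group F] {K : Subgroup F} [K.Normal]

theorem finite_range_eval_conjNormal {A : Type*} [AddCommGroup A] [K.FiniteIndex] (x : K) :
    (Set.range fun f : F =>
      (AddMonoidHom.eval (.ofMul (MulAut.conjNormal f x)) : (Additive K →+ A) →+ A)).Finite := by
  have : Finite (F ⧸ K) := inferInstance
  refine (Set.finite_range fun q : F ⧸ K =>
    (AddMonoidHom.eval (.ofMul (MulAut.conjNormal q.out x)) : (Additive K →+ A) →+ A)).subset ?_
  rintro _ ⟨f, rfl⟩
  refine ⟨f, AddMonoidHom.ext fun χ => ?_⟩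
  obtain ⟨k, hk⟩ := QuotientGroup.mk_out_eq_mul K f
  have hconj : MulAut.conjNormal (k : F) x = k * x * k⁻¹ := Subtype.ext (by simp)
  simp [hk, hconj]

theorem exists_hom_eventually_not_dvd [K.FiniteIndex] {v : K} {T : Set K} (hT : T.Finite)
    (hη : ∀ f : F, ∀ w ∈ T, ∃ η : Additive K →+ ℤ,
      η (.ofMul v) = 0 ∧ η (.ofMul (MulAut.conjNormal f w)) ≠ 0) :
    ∃ ψ : Additive K →+ ℤ, ψ (.ofMul v) = 0 ∧ ∀ᶠ p : ℕ in Filter.atTop,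
      ∀ f : F, ∀ w ∈ T, ¬(p : ℤ) ∣ ψ (.ofMul (MulAut.conjNormal f w)) := by
  let E : Set ((Additive K →+ ℤ) →+ ℤ) :=
    ⋃ w ∈ T, Set.range fun f : F => AddMonoidHom.eval (.ofMul (MulAut.conjNormal f w))
  have hE : E.Finite := hT.biUnion fun w _ => finite_range_eval_conjNormal w
  let M := (AddMonoidHom.eval (.ofMul v) : (Additive K →+ ℤ) →+ ℤ).ker
  obtain ⟨⟨ψ, hψv⟩, hψ⟩ := exists_forall_apply_ne_zero
    (hE.image fun ε => ε.comp M.subtype) <| by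
      simp only [E, Set.forall_mem_image, Set.mem_iUnion, Set.mem_range]
      rintro _ ⟨w, hw, f, rfl⟩ hzero
      obtain ⟨η, hηv, hηw⟩ := hη f w hw
      exact hηw (DFunLike.congr_fun hzero ⟨η, hηv⟩)
  refine ⟨ψ, hψv, ?_⟩
  have hp := (Filter.eventually_all_finite hE).2 fun ε hε =>
    eventually_not_intCast_dvd (hψ _ (Set.mem_image_of_mem _ hε))
  filter_upwards [hp] with p hp f w hw
  exact hp _ (Set.mem_biUnion hw ⟨f, rfl⟩)

/-- The power of `x` with exponent the index of `K`, as an element of `K`. It makes elements of `F`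
into arguments of homomorphisms on `K`. -/
noncomputable def indexPow (K : Subgroup F) [K.Normal] (x : F) : K :=
  ⟨x ^ K.index, K.pow_index_mem x⟩

theorem conjNormal_indexPow (f x : F) :
    MulAut.conjNormal f (indexPow K x) = indexPow K (f * x * f⁻¹) :=
  Subtype.ext conj_pow.symm

theorem hasAdjustableOrder_of_not_dvd [K.FiniteIndex] [IsFreeGroup K] {ψ θ : Additive K →+ ℤ}
    {p : ℕ} [Fact p.Prime] {x : F} (hψx : ψ (.ofMul (indexPow K x)) = 0)
    (hθx : ¬(p : ℤ) ∣ θ (.ofMul (indexPow K x))) {T : Set F}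
    (hT : ∀ f, ∀ y ∈ T, ¬(p : ℤ) ∣ ψ (.ofMul (indexPow K (f * y * f⁻¹)))) :
    HasAdjustableOrder x T := by
  have hcard : Nat.card (Multiplicative (ZMod p)) = p := Nat.card_zmod p
  have hxker : indexPow K x ∈ (reduceMod ψ p).ker := mem_ker_reduceMod.2 (by simp [hψx])
  obtain ⟨φ, hφx, hφ⟩ := exists_kerHom_ne_zero (reduceMod ψ p) θ hxker (by rwa [hcard])
  let j : (reduceMod ψ p).ker →* F := K.subtype.comp (reduceMod ψ p).ker.subtype
  have hj : Function.Injective j := K.subtype_injective.comp (Subgroup.subtype_injective _)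
  have hrange : j.range.FiniteIndex := by
    constructor
    rw [MonoidHom.range_comp, Subgroup.range_subtype, Subgroup.index_map_subtype]
    exact mul_ne_zero Subgroup.FiniteIndex.index_ne_zero Subgroup.FiniteIndex.index_ne_zero
  refine (hasAdjustableOrder_of_apply_ne_zero hj (z := ⟨_, hxker⟩) rfl hφx).mono fun y hy f => ?_
  set w := indexPow K (f * y * f⁻¹) with hw
  have hwp : w ^ p ∈ (reduceMod ψ p).ker := mem_ker_reduceMod.2 (by simp)
  have hgen : Subgroup.zpowers (reduceMod ψ p w) = ⊤ :=
    zpowers_eq_top_of_prime_card hcard fun h => hT f y hy (mem_ker_reduceMod.1 h)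
  refine ⟨⟨w ^ p, hwp⟩, hφ w p hwp hgen, K.index * p,
    mul_ne_zero Subgroup.FiniteIndex.index_ne_zero (Fact.out : p.Prime).ne_zero, ?_⟩
  simp [j, hw, indexPow, conj_pow, pow_mul]

end Separation

theorem hasAdjustableOrder_of_areIndependent {α : Type*} {x : FreeGroup α}
    {T : Set (FreeGroup α)} (hT : T.Finite) (hx : x ≠ 1) (hT1 : 1 ∉ T)
    (hind : ∀ y ∈ T, AreIndependent x y) : HasAdjustableOrder x T := by
  obtain ⟨P, _, _, π, hπ⟩ := exists_forall_hasEmbeddedAxis (U := insert x (T ∪ T⁻¹))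
    ((hT.union hT.inv).insert x) (by simp [hx.symm, hT1])
  have hm : 0 < π.ker.index := Nat.pos_of_ne_zero Subgroup.FiniteIndex.index_ne_zero
  obtain ⟨e, he⟩ := (hπ x (by simp)).exists_edgeHom_pow_pos hm (π.ker.pow_index_mem x)
  obtain ⟨ψ, hψx, hψ⟩ := exists_hom_eventually_not_dvd (v := indexPow π.ker x)
    (hT.image (indexPow π.ker)) <| by
      rintro f _ ⟨y, hy, rfl⟩
      have hinv : HasEmbeddedAxis π (f * y * f⁻¹)⁻¹ := by
        rw [conj_inv]
        exact (hπ y⁻¹ (by simp [hy])).conj f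
      rw [conjNormal_indexPow]
      exact ((hind y hy).conj_right f).exists_hom_eq_zero_ne_zero (hπ x (by simp))
        ((hπ y (by simp [hy])).conj f) hinv hm _ _
  obtain ⟨p, hp, hpψ, hpe⟩ := ((Nat.frequently_atTop_iff_infinite.2
    Nat.infinite_setOfPred_prime).and_eventually
      (hψ.and (eventually_not_intCast_dvd he.ne'))).exists
  have : Fact p.Prime := ⟨hp⟩
  refine hasAdjustableOrder_of_not_dvd hψx hpe fun f y hy => ?_
  rw [← conjNormal_indexPow]
  exact hpψ f _ (Set.mem_image_of_mem _ hy)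

theorem free_groups_are_omnipotent_general {F : Type u} [Group F] [IsFreeGroup F] {ι : Type*}
    [Finite ι] {g : ι → F} (hg : ∀ i, g i ≠ 1)
    (hind : Pairwise fun i j => AreIndependent (g i) (g j)) :
    ∃ d : ℕ, 0 < d ∧ ∀ n : ι → ℕ, (∀ i, 0 < n i) →
      ∃ (Q : Type u) (_ : Group Q) (q : F →* Q), Finite Q ∧ Function.Surjective q ∧
        ∀ i, orderOf (q (g i)) = d * n i := by
  let e := IsFreeGroup.toFreeGroup F
  have hadj (i : ι) : HasAdjustableOrder (e (g i)) ((fun j => e (g j)) '' {i}ᶜ) := by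
    refine hasAdjustableOrder_of_areIndependent (Set.toFinite _) (by simpa using hg i) ?_ ?_
    · rintro ⟨j, -, hj⟩
      exact hg j ((map_eq_one_iff e e.injective).1 hj)
    · rintro _ ⟨j, hj, rfl⟩
      exact (hind (Ne.symm hj)).map_equiv e
  obtain ⟨d, hd, hN⟩ := exists_forall_orderOf_mk_eq hadj
  refine ⟨d, hd, fun n hn => ?_⟩
  obtain ⟨N, hNnormal, hNfin, horder⟩ := hN n hn
  exact ⟨_ ⧸ N, inferInstance, (QuotientGroup.mk' N).comp e.toMonoidHom, inferInstance,
    (QuotientGroup.mk'_surjective N).comp e.surjective, horder⟩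

/-- **Omnipotence of free groups** (Wise; Theorem 3.22): given pairwise independent
nontrivial elements `g 0, …, g (r-1)` of a finitely generated free group `F` (no
nontrivial powers of distinct ones are conjugate), there is `d ≥ 1` such that for all
positive integers `n 0, …, n (r-1)` there is a finite quotient `q : F → Q` in which
`q (g i)` has order exactly `d * n i` for each `i`. -/
theorem free_groups_are_omnipotent
    (F : Type) [Group F] [IsFreeGroup F] (hF : Group.FG F)
    (r : ℕ) (g : Fin r → F) (hg : ∀ i, g i ≠ 1)
    (hind : ∀ i j : Fin r, i ≠ j → ∀ m n : ℤ, m ≠ 0 → n ≠ 0 →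
      ¬IsConj (g i ^ m) (g j ^ n)) :
    ∃ d : ℕ, 0 < d ∧ ∀ n : Fin r → ℕ, (∀ i, 0 < n i) →
      ∃ (Q : Type) (_ : Group Q) (q : F →* Q), Finite Q ∧ Function.Surjective q ∧
        ∀ i, orderOf (q (g i)) = d * n i :=
  free_groups_are_omnipotent_general hg fun i j => hind i j
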